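/- Let β ∈ [1,2) and (c,b) ∈ C(β). For every ε > 0 there exists K ∈ ℕ such that for all k ≥ K, the set F_k of k-feasible sequences in A^{≤k}(c,b) is nonempty and sup_{α ∈ A(c,b)} P(c,α) − ε ≤ max_{α ∈ F_k} P(c,α) ≤ sup_{α ∈ A(c,b)} P(c,α). (That is, lim_{k→∞} max over k-feasible α ∈ A^{≤k}(c,b) of P(c,α) equals max_{α ∈ A(c,b)} P(c,α).) -/

import Mathlib

/-- The binary entropy function, `h(p) = p log₂(1/p) + (1-p) log₂(1/(1-p))`,
with the convention `h(0) = h(1) = 0` (automatic since `1/0 = 0` and `logb 2 0 = 0`). -/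
noncomputable def binH (p : ℝ) : ℝ :=
  p * Real.logb 2 (1 / p) + (1 - p) * Real.logb 2 (1 / (1 - p))

/-- `(c, b) ∈ C(β)`: `c : ℕ → [0,1]`, `∑ cᵢ/2ⁱ = 1/(β·2ᵇ)` and `∑ cᵢ ≤ 1`
(the latter expressed via partial sums, which is equivalent for nonnegative terms). -/
def memC (β : ℝ) (c : ℕ → ℝ) (b : ℕ) : Prop :=
  (∀ i, c i ∈ Set.Icc (0 : ℝ) 1) ∧
  (∑' i : ℕ, c i / 2 ^ i) = 1 / (β * 2 ^ b) ∧
  ∀ n : ℕ, (∑ i ∈ Finset.range n, c i) ≤ 1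

/-- `α ∈ A(c,b)`: `α : ℕ → [0,1]` with `∑ αᵢ cᵢ / 2ⁱ = 1/(β·2^{b+1})`. -/
def memA (β : ℝ) (b : ℕ) (c α : ℕ → ℝ) : Prop :=
  (∀ i, α i ∈ Set.Icc (0 : ℝ) 1) ∧
  (∑' i : ℕ, α i * c i / 2 ^ i) = 1 / (β * 2 ^ (b + 1))

/-- `P(c,α) = ∑ h(αᵢ)·cᵢ − h(∑ αᵢ·cᵢ)`. -/
noncomputable def Pfun (c α : ℕ → ℝ) : ℝ :=
  (∑' i : ℕ, binH (α i) * c i) - binH (∑' i : ℕ, α i * c i)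

/-- `sup_{α ∈ A(c,b)} P(c,α)`. -/
noncomputable def supP (β : ℝ) (b : ℕ) (c : ℕ → ℝ) : ℝ :=
  sSup {y | ∃ α, memA β b c α ∧ y = Pfun c α}

/-- `G(β) = inf_{(c,b) ∈ C(β)} sup_{α ∈ A(c,b)} P(c,α)`. -/
noncomputable def Gfun (β : ℝ) : ℝ :=
  sInf {y | ∃ c b, memC β c b ∧ y = supP β b c}

/-- `(c,b)` is `k`-feasible: `cᵢ · β · 2ᵏ ∈ ℕ` for every `i`. -/
def kFeasC (β : ℝ) (k : ℕ) (c : ℕ → ℝ) : Prop :=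
  ∀ i, ∃ m : ℕ, c i * (β * 2 ^ k) = m

/-- `α` is `k`-feasible (for `c`): `αᵢ · cᵢ · β · 2ᵏ ∈ ℕ` for every `i`, and if there is
a largest index `t` with `c t > 0` then `α t < 1`. -/
def kFeasA (β : ℝ) (k : ℕ) (c α : ℕ → ℝ) : Prop :=
  (∀ i, ∃ m : ℕ, α i * c i * (β * 2 ^ k) = m) ∧
  (∀ t, 0 < c t → (∀ i, t < i → c i = 0) → α t < 1)

open Filter Topology

theorem binH_eq_binEntropy_div (p : ℝ) : binH p = Real.binEntropy p / Real.log 2 := by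
  simp only [binH, Real.binEntropy, Real.logb, one_div]
  ring

theorem continuous_binH : Continuous binH := by
  rw [funext binH_eq_binEntropy_div]
  exact Real.binEntropy_continuous.div_const _

theorem binH_nonneg {p : ℝ} (hp : p ∈ Set.Icc (0 : ℝ) 1) : 0 ≤ binH p := by
  rw [binH_eq_binEntropy_div]
  exact div_nonneg (Real.binEntropy_nonneg hp.1 hp.2) (Real.log_nonneg one_le_two)

theorem binH_le_one (p : ℝ) : binH p ≤ 1 := by
  rw [binH_eq_binEntropy_div]
  exact div_le_one_of_le₀ Real.binEntropy_le_log_two (Real.log_nonneg one_le_two)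

theorem memC.summable {β : ℝ} {c : ℕ → ℝ} {b : ℕ} (hC : memC β c b) : Summable c :=
  summable_of_sum_range_le (fun i => (hC.1 i).1) hC.2.2

theorem summable_mul_div_two_pow {c α : ℕ → ℝ} (hc : ∀ i, 0 ≤ c i) (hs : Summable c)
    (hα : ∀ i, α i ∈ Set.Icc (0 : ℝ) 1) : Summable fun i => α i * c i / 2 ^ i := by
  refine hs.of_nonneg_of_le (fun i => ?_) fun i => ?_
  · exact div_nonneg (mul_nonneg (hα i).1 (hc i)) (by positivity)
  · exact (div_le_self (mul_nonneg (hα i).1 (hc i)) (one_le_pow₀ one_le_two)).trans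
      (mul_le_of_le_one_left (hc i) (hα i).2)

theorem Pfun_le_tsum {c α : ℕ → ℝ} (hc : ∀ i, 0 ≤ c i) (hs : Summable c)
    (hs1 : ∑' i, c i ≤ 1) (hα : ∀ i, α i ∈ Set.Icc (0 : ℝ) 1) : Pfun c α ≤ ∑' i, c i := by
  have hle : ∀ i, α i * c i ≤ c i := fun i => mul_le_of_le_one_left (hc i) (hα i).2
  have hnn : ∀ i, 0 ≤ α i * c i := fun i => mul_nonneg (hα i).1 (hc i)
  have hsα : Summable fun i => α i * c i := hs.of_nonneg_of_le hnn hle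
  have hle' : ∀ i, binH (α i) * c i ≤ c i := fun i => mul_le_of_le_one_left (hc i) (binH_le_one _)
  have hsh : Summable fun i => binH (α i) * c i :=
    hs.of_nonneg_of_le (fun i => mul_nonneg (binH_nonneg (hα i)) (hc i)) hle'
  have h1 : ∑' i, binH (α i) * c i ≤ ∑' i, c i := hsh.tsum_le_tsum hle' hs
  have h2 : 0 ≤ binH (∑' i, α i * c i) :=
    binH_nonneg ⟨tsum_nonneg hnn, (hsα.tsum_le_tsum hle hs).trans hs1⟩
  unfold Pfun
  linarith

/-- `P(c, ·)` is continuous on `[0,1]^ℕ` for pointwise convergence on the support of `c`. -/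
theorem tendsto_Pfun {c α : ℕ → ℝ} (hc : ∀ i, 0 ≤ c i) (hs : Summable c)
    {a : ℕ → ℕ → ℝ} (ha : ∀ᶠ n in atTop, ∀ i, a n i ∈ Set.Icc (0 : ℝ) 1)
    (hlim : ∀ i, c i ≠ 0 → Tendsto (fun n => a n i) atTop (𝓝 (α i))) :
    Tendsto (fun n => Pfun c (a n)) atTop (𝓝 (Pfun c α)) := by
  have key : ∀ g : ℝ → ℝ, Continuous g → (∀ x ∈ Set.Icc (0 : ℝ) 1, 0 ≤ g x ∧ g x ≤ 1) →
      Tendsto (fun n => ∑' i, g (a n i) * c i) atTop (𝓝 (∑' i, g (α i) * c i)) := by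
    intro g hg hb
    refine tendsto_tsum_of_dominated_convergence hs (fun i => ?_) ?_
    · by_cases h : c i = 0
      · simp [h]
      · exact ((hg.tendsto _).comp (hlim i h)).mul_const _
    · filter_upwards [ha] with n hn i
      obtain ⟨h0, h1⟩ := hb _ (hn i)
      rw [Real.norm_of_nonneg (mul_nonneg h0 (hc i))]
      exact mul_le_of_le_one_left (hc i) h1
  have h1 := key binH continuous_binH fun x hx => ⟨binH_nonneg hx, binH_le_one x⟩
  have h2 := key id continuous_id fun x hx => ⟨hx.1, hx.2⟩
  exact h1.sub ((continuous_binH.tendsto _).comp h2)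

/-- `P(c,α)` is asymptotically reached, up to any error, by `k`-feasible members of
`A^{≤k}(c,b)`. -/
def FeasiblyApproximable (β : ℝ) (b : ℕ) (c α : ℕ → ℝ) : Prop :=
  ∀ ε > (0 : ℝ), ∀ᶠ k in atTop, ∃ a, memA β b c a ∧ (∀ i, k < i → a i = 0) ∧
    kFeasA β k c a ∧ Pfun c α - ε < Pfun c a

theorem FeasiblyApproximable.of_tendsto {β : ℝ} {b : ℕ} {c α : ℕ → ℝ} {a : ℕ → ℕ → ℝ}
    (h : Tendsto (fun n => Pfun c (a n)) atTop (𝓝 (Pfun c α)))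
    (ha : ∀ᶠ n in atTop, FeasiblyApproximable β b c (a n)) : FeasiblyApproximable β b c α := by
  intro ε hε
  obtain ⟨n, hn, hP⟩ :=
    (ha.and (h.eventually (lt_mem_nhds (sub_lt_self _ (half_pos hε))))).exists
  filter_upwards [hn (ε / 2) (half_pos hε)] with k ⟨x, hx, h0, hf, hPx⟩
  exact ⟨x, hx, h0, hf, by linarith⟩

/-- Round `α i * c i * (β * 2 ^ k)` down to an integer for `i < t`, put the missing mass on
index `t`, and vanish beyond `t`. -/
noncomputable def roundAt (β : ℝ) (b : ℕ) (c α : ℕ → ℝ) (t k i : ℕ) : ℝ :=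
  if i < t then ⌊α i * c i * (β * 2 ^ k)⌋₊ / (c i * (β * 2 ^ k))
  else if i = t then
    2 ^ t * (1 / (β * 2 ^ (b + 1)) -
      ∑ j ∈ Finset.range t, ⌊α j * c j * (β * 2 ^ k)⌋₊ / (β * 2 ^ k) / 2 ^ j) / c t
  else 0

theorem tendsto_floor_mul_two_pow_div {β x : ℝ} (hβ : 0 < β) (hx : 0 ≤ x) :
    Tendsto (fun k : ℕ => (⌊x * (β * 2 ^ k)⌋₊ : ℝ) / (β * 2 ^ k)) atTop (𝓝 x) := by
  have h : Tendsto (fun k : ℕ => β * (2 : ℝ) ^ k) atTop atTop :=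
    (tendsto_pow_atTop_atTop_of_one_lt one_lt_two).const_mul_atTop hβ
  exact (tendsto_nat_floor_mul_div_atTop hx).comp h

theorem sum_range_add_eq_of_support {f : ℕ → ℝ} {t : ℕ} (h : ∀ i, t < i → f i = 0) :
    ∑' i, f i = ∑ i ∈ Finset.range t, f i + f t := by
  rw [tsum_eq_sum (s := Finset.range (t + 1)), Finset.sum_range_succ]
  intro i hi
  exact h i (by simpa using hi)

theorem feasiblyApproximable_of_support {β : ℝ} {b : ℕ} {c α : ℕ → ℝ} (hβ : 1 ≤ β)
    (hc : ∀ i, 0 ≤ c i) (hs : Summable c) (hα : memA β b c α) (hα1 : ∀ i, α i < 1) {t : ℕ}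
    (ht : 0 < c t) (hsupp : ∀ i, t < i → α i * c i = 0) : FeasiblyApproximable β b c α := by
  have hβ0 : 0 < β := by linarith
  have hsum : ∑ i ∈ Finset.range t, α i * c i / 2 ^ i + α t * c t / 2 ^ t
      = 1 / (β * 2 ^ (b + 1)) := by
    rw [← hα.2, ← sum_range_add_eq_of_support (f := fun i => α i * c i / 2 ^ i)]
    intro i hi
    simp [hsupp i hi]
  have hαc : ∀ i, 0 ≤ α i * c i := fun i => mul_nonneg (hα.1 i).1 (hc i)
  have hB : ∀ k : ℕ, 0 < β * 2 ^ k := fun k => by positivity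
  have hfl : ∀ k i, (⌊α i * c i * (β * 2 ^ k)⌋₊ : ℝ) / (β * 2 ^ k) ≤ α i * c i := fun k i =>
    (div_le_iff₀ (hB k)).2 (Nat.floor_le (mul_nonneg (hαc i) (hB k).le))
  have hlt : ∀ k i, i < t → roundAt β b c α t k i * c i
      = ⌊α i * c i * (β * 2 ^ k)⌋₊ / (β * 2 ^ k) := by
    intro k i hi
    simp only [roundAt, hi, if_true]
    by_cases h : c i = 0
    · simp [h]
    · have := (hB k).ne'
      field_simp
  have hat : ∀ k, roundAt β b c α t k t = 2 ^ t * (1 / (β * 2 ^ (b + 1)) -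
      ∑ j ∈ Finset.range t, ⌊α j * c j * (β * 2 ^ k)⌋₊ / (β * 2 ^ k) / 2 ^ j) / c t := by
    intro k
    simp [roundAt]
  have hgt : ∀ k i, t < i → roundAt β b c α t k i = 0 := by
    intro k i hi
    simp [roundAt, hi.not_gt, hi.ne']
  have hαt : α t = 2 ^ t * (1 / (β * 2 ^ (b + 1)) -
      ∑ j ∈ Finset.range t, α j * c j / 2 ^ j) / c t := by
    rw [← hsum]
    field_simp
    ring
  have hlim_lt : ∀ i, i < t → c i ≠ 0 →
      Tendsto (fun k => roundAt β b c α t k i) atTop (𝓝 (α i)) := by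
    intro i hi h
    have h1 := (tendsto_floor_mul_two_pow_div hβ0 (hαc i)).div_const (c i)
    rw [mul_div_cancel_right₀ _ h] at h1
    refine h1.congr fun k => ?_
    rw [← hlt k i hi, mul_div_cancel_right₀ _ h]
  have hlim_t : Tendsto (fun k => roundAt β b c α t k t) atTop (𝓝 (α t)) := by
    rw [hαt]
    simp_rw [hat]
    refine Tendsto.div_const (Tendsto.const_mul _ (Tendsto.const_sub _ ?_)) _
    exact tendsto_finsetSum _ fun j _ =>
      (tendsto_floor_mul_two_pow_div hβ0 (hαc j)).div_const _
  have hlim : ∀ i, c i ≠ 0 → Tendsto (fun k => roundAt β b c α t k i) atTop (𝓝 (α i)) := by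
    intro i h
    rcases lt_trichotomy i t with hi | rfl | hi
    · exact hlim_lt i hi h
    · exact hlim_t
    · have : α i = 0 := (mul_eq_zero.1 (hsupp i hi)).resolve_right h
      simp [hgt _ i hi, this]
  have hα_le : ∀ k, α t ≤ roundAt β b c α t k t := by
    intro k
    rw [hat, hαt]
    gcongr with j _
    exact hfl k j
  have hnonneg : ∀ k i, 0 ≤ roundAt β b c α t k i := by
    intro k i
    rcases lt_trichotomy i t with hi | rfl | hi
    · simp only [roundAt, hi, if_true]
      exact div_nonneg (Nat.cast_nonneg _) (mul_nonneg (hc i) (hB k).le)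
    · exact (hα.1 i).1.trans (hα_le k)
    · exact (hgt k i hi).ge
  have hlt1 : ∀ᶠ k in atTop, ∀ i, roundAt β b c α t k i < 1 := by
    filter_upwards [hlim_t.eventually (gt_mem_nhds (hα1 t))] with k hk i
    rcases lt_trichotomy i t with hi | rfl | hi
    · rcases (hc i).eq_or_lt with h | h
      · simp [roundAt, hi, ← h]
      · have h1 := (hlt k i hi).trans_le (hfl k i)
        exact (le_of_mul_le_mul_right h1 h).trans_lt (hα1 i)
    · exact hk
    · simp [hgt k i hi]
  have hP := tendsto_Pfun hc hs (hlt1.mono fun k hk i => ⟨hnonneg k i, (hk i).le⟩) hlim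
  intro ε hε
  filter_upwards [hlt1, hP.eventually (lt_mem_nhds (sub_lt_self _ hε)), eventually_ge_atTop t,
    eventually_ge_atTop (b + 1)] with k hk hPk hkt hkb
  refine ⟨roundAt β b c α t k, ⟨fun i => ⟨hnonneg k i, (hk i).le⟩, ?_⟩,
    fun i hi => hgt k i (hkt.trans_lt hi), ⟨fun i => ?_, fun i _ _ => hk i⟩, hPk⟩
  · rw [sum_range_add_eq_of_support (t := t) (fun i hi => by simp [hgt k i hi]),
      Finset.sum_congr rfl fun i hi => by rw [hlt k i (Finset.mem_range.1 hi)], hat,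
      div_mul_cancel₀ _ ht.ne', mul_div_cancel_left₀ _ (by positivity), add_sub_cancel]
  · rcases lt_trichotomy i t with hi | rfl | hi
    · exact ⟨⌊α i * c i * (β * 2 ^ k)⌋₊, by rw [hlt k i hi, div_mul_cancel₀ _ (hB k).ne']⟩
    · obtain ⟨z, hz⟩ : ∃ z : ℤ, roundAt β b c α i k i * c i * (β * 2 ^ k) = z := by
        obtain ⟨d, rfl⟩ := Nat.exists_eq_add_of_le hkb
        refine ⟨2 ^ (i + d) - ∑ j ∈ Finset.range i,
          2 ^ (i - j) * (⌊α j * c j * (β * 2 ^ (b + 1 + d))⌋₊ : ℤ), ?_⟩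
        have e : ∀ j ∈ Finset.range i,
            (2 : ℝ) ^ (i - j) * (⌊α j * c j * (β * 2 ^ (b + 1 + d))⌋₊ : ℝ)
            = 2 ^ i * (β * 2 ^ (b + 1 + d)) *
              (⌊α j * c j * (β * 2 ^ (b + 1 + d))⌋₊ / (β * 2 ^ (b + 1 + d)) / 2 ^ j) := by
          intro j hj
          rw [pow_sub₀ _ two_ne_zero (Finset.mem_range.1 hj).le]
          field_simp
        push_cast
        rw [Finset.sum_congr rfl e, ← Finset.mul_sum, hat, div_mul_cancel₀ _ ht.ne', mul_sub,
          sub_mul]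
        congr 1
        · field_simp
          ring
        · ring
      have hz0 : 0 ≤ z := by
        have : (0 : ℝ) ≤ z := hz ▸ mul_nonneg (mul_nonneg (hnonneg k i) (hc i)) (hB k).le
        exact_mod_cast this
      lift z to ℕ using hz0
      exact ⟨z, by exact_mod_cast hz⟩
    · exact ⟨0, by simp [hgt k i hi]⟩

/-- Truncate `α` after index `N` and move the lost mass to index `s`. -/
noncomputable def truncAt (c α : ℕ → ℝ) (s N : ℕ) : ℕ → ℝ :=
  Function.update (fun i => if i < N then α i else 0) s
    (α s + 2 ^ s / c s * (∑' i, α i * c i / 2 ^ i - ∑ i ∈ Finset.range N, α i * c i / 2 ^ i))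

theorem feasiblyApproximable_of_mem_Ioo {β : ℝ} {b : ℕ} {c α : ℕ → ℝ} (hβ : 1 ≤ β)
    (hc : ∀ i, 0 ≤ c i) (hs : Summable c) (hα : memA β b c α)
    (hα1 : ∀ i, α i ∈ Set.Ioo (0 : ℝ) 1) {s : ℕ} (hcs : 0 < c s) :
    FeasiblyApproximable β b c α := by
  have hsα := summable_mul_div_two_pow hc hs hα.1
  have hself : ∀ N, truncAt c α s N s = α s + 2 ^ s / c s *
      (∑' i, α i * c i / 2 ^ i - ∑ i ∈ Finset.range N, α i * c i / 2 ^ i) := by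
    intro N
    simp [truncAt]
  have hne : ∀ N i, i ≠ s → truncAt c α s N i = if i < N then α i else 0 := by
    intro N i hi
    simp [truncAt, hi]
  have hlim_s : Tendsto (fun N => truncAt c α s N s) atTop (𝓝 (α s)) := by
    simp_rw [hself]
    simpa using (((hsα.hasSum.tendsto_sum_nat).const_sub
      (∑' i, α i * c i / 2 ^ i)).const_mul (2 ^ s / c s)).const_add (α s)
  have hlim : ∀ i, c i ≠ 0 → Tendsto (fun N => truncAt c α s N i) atTop (𝓝 (α i)) := by
    intro i _
    by_cases hi : i = s
    · exact hi ▸ hlim_s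
    · refine tendsto_const_nhds.congr' ?_
      filter_upwards [eventually_gt_atTop i] with N hN
      simp [hne N i hi, hN]
  have hmem : ∀ᶠ N in atTop, ∀ i, truncAt c α s N i ∈ Set.Ico (0 : ℝ) 1 := by
    filter_upwards [hlim_s.eventually (Ioo_mem_nhds (hα1 s).1 (hα1 s).2)] with N hN i
    by_cases hi : i = s
    · rw [hi]
      exact ⟨hN.1.le, hN.2⟩
    · rw [hne N i hi]
      split_ifs
      · exact ⟨(hα1 i).1.le, (hα1 i).2⟩
      · simp
  refine .of_tendsto (tendsto_Pfun hc hs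
    (hmem.mono fun N hN i => Set.Ico_subset_Icc_self (hN i)) hlim) ?_
  filter_upwards [hmem, eventually_gt_atTop s] with N hN hsN
  classical
  have hsupp : ∀ i, N ≤ i → truncAt c α s N i = 0 := by
    intro i hi
    rw [hne N i (by omega), if_neg hi.not_gt]
  refine feasiblyApproximable_of_support hβ hc hs ⟨fun i => Set.Ico_subset_Icc_self (hN i), ?_⟩
    (fun i => (hN i).2) (t := Nat.findGreatest (fun i => 0 < c i) N)
    (Nat.findGreatest_spec (P := fun i => 0 < c i) hsN.le hcs) fun i hi => ?_
  · rw [tsum_eq_sum (s := Finset.range N) fun i hi => by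
      simp [hsupp i (by simpa using hi)], ← hα.2]
    have hsr : s ∈ Finset.range N := Finset.mem_range.2 hsN
    have h1 := Finset.add_sum_erase (Finset.range N)
      (fun i => truncAt c α s N i * c i / 2 ^ i) hsr
    have h2 := Finset.add_sum_erase (Finset.range N) (fun i => α i * c i / 2 ^ i) hsr
    have h3 : ∑ i ∈ (Finset.range N).erase s, truncAt c α s N i * c i / 2 ^ i
        = ∑ i ∈ (Finset.range N).erase s, α i * c i / 2 ^ i := by
      refine Finset.sum_congr rfl fun i hi => ?_
      obtain ⟨his, hiN⟩ := Finset.mem_erase.1 hi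
      rw [hne N i his, if_pos (Finset.mem_range.1 hiN)]
    have h4 : truncAt c α s N s * c s / 2 ^ s = α s * c s / 2 ^ s +
        (∑' i, α i * c i / 2 ^ i - ∑ i ∈ Finset.range N, α i * c i / 2 ^ i) := by
      rw [hself]
      field_simp
    linarith
  · rcases le_total N i with h | h
    · simp [hsupp i h]
    · have := Nat.findGreatest_is_greatest hi h
      simp [le_antisymm (not_lt.1 this) (hc i)]

theorem memA_half {β : ℝ} {b : ℕ} {c : ℕ → ℝ} (hC : memC β c b) :
    memA β b c fun _ => 1 / 2 := by
  refine ⟨fun _ => by norm_num, ?_⟩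
  simp_rw [mul_div_assoc]
  rw [tsum_mul_left, hC.2.1, pow_succ]
  field_simp

theorem memA.convexCombination {β : ℝ} {b : ℕ} {c α α' : ℕ → ℝ} (hc : ∀ i, 0 ≤ c i)
    (hs : Summable c) (hα : memA β b c α) (hα' : memA β b c α') {x y : ℝ} (hx : 0 ≤ x)
    (hy : 0 ≤ y) (hxy : x + y = 1) : memA β b c fun i => x * α i + y * α' i := by
  refine ⟨fun i => convex_Icc (0 : ℝ) 1 (hα.1 i) (hα'.1 i) hx hy hxy, ?_⟩
  have h1 := (summable_mul_div_two_pow hc hs hα.1).hasSum.mul_left x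
  have h2 := (summable_mul_div_two_pow hc hs hα'.1).hasSum.mul_left y
  have h := h1.add h2
  rw [hα.2, hα'.2, ← add_mul, hxy, one_mul] at h
  rw [← h.tsum_eq]
  exact tsum_congr fun i => by ring

theorem memC.exists_pos {β : ℝ} {c : ℕ → ℝ} {b : ℕ} (hβ : 1 ≤ β) (hC : memC β c b) :
    ∃ s, 0 < c s := by
  by_contra! h
  have h0 : ∀ i, c i = 0 := fun i => le_antisymm (h i) (hC.1 i).1
  have h1 : 0 < 1 / (β * 2 ^ b) := by positivity
  rw [← hC.2.1] at h1
  simp [h0] at h1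

theorem memA.feasiblyApproximable {β : ℝ} {b : ℕ} {c α : ℕ → ℝ} (hβ : 1 ≤ β)
    (hC : memC β c b) (hα : memA β b c α) : FeasiblyApproximable β b c α := by
  have hc : ∀ i, 0 ≤ c i := fun i => (hC.1 i).1
  obtain ⟨s, hcs⟩ := hC.exists_pos hβ
  have hδ : ∀ n : ℕ, 0 < 1 / ((n : ℝ) + 1) ∧ 1 / ((n : ℝ) + 1) ≤ 1 := fun n =>
    ⟨by positivity, div_le_one_of_le₀ (by linarith [n.cast_nonneg (α := ℝ)]) (by positivity)⟩
  have hmem : ∀ n : ℕ, memA β b c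
      fun i => (1 - 1 / ((n : ℝ) + 1)) * α i + 1 / ((n : ℝ) + 1) * (1 / 2) := fun n =>
    hα.convexCombination hc hC.summable (memA_half hC) (by linarith [(hδ n).2]) (hδ n).1.le
      (by ring)
  refine .of_tendsto (tendsto_Pfun hc hC.summable
    (a := fun n i => (1 - 1 / ((n : ℝ) + 1)) * α i + 1 / ((n : ℝ) + 1) * (1 / 2))
    (.of_forall fun n => (hmem n).1) fun i _ => ?_) (.of_forall fun n => ?_)
  · have h := tendsto_one_div_add_atTop_nhds_zero_nat (𝕜 := ℝ)
    simpa using ((h.const_sub 1).mul_const (α i)).add (h.mul_const 2⁻¹)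
  · refine feasiblyApproximable_of_mem_Ioo hβ hc hC.summable (hmem n) (fun i => ?_) hcs
    obtain ⟨h0, h1⟩ := hδ n
    have h2 := mul_nonneg (sub_nonneg.2 h1) (hα.1 i).1
    have h3 := mul_nonneg (sub_nonneg.2 h1) (sub_nonneg.2 (hα.1 i).2)
    constructor <;> nlinarith

/-- The maximum of `P(c,·)` over `k`-feasible sequences in `A^{≤k}(c,b)` converges to
`sup_{α ∈ A(c,b)} P(c,α)` as `k → ∞`. -/
theorem lim_max_kfeasible (β : ℝ) (hβ : β ∈ Set.Ico (1 : ℝ) 2)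
    (c : ℕ → ℝ) (b : ℕ) (hC : memC β c b) :
    ∀ ε > (0 : ℝ), ∃ K : ℕ, ∀ k : ℕ, K ≤ k →
      (∃ α, memA β b c α ∧ (∀ i, k < i → α i = 0) ∧ kFeasA β k c α) ∧
      supP β b c - ε ≤
        sSup {y | ∃ α, memA β b c α ∧ (∀ i, k < i → α i = 0) ∧ kFeasA β k c α ∧ y = Pfun c α} ∧
      sSup {y | ∃ α, memA β b c α ∧ (∀ i, k < i → α i = 0) ∧ kFeasA β k c α ∧ y = Pfun c α} ≤ supP β b c := by
  intro ε hε
  have hbdd : BddAbove {y | ∃ α, memA β b c α ∧ y = Pfun c α} := by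
    refine ⟨∑' i, c i, ?_⟩
    rintro _ ⟨α, hα, rfl⟩
    exact Pfun_le_tsum (fun i => (hC.1 i).1) hC.summable
      (Real.tsum_le_of_sum_range_le (fun i => (hC.1 i).1) hC.2.2) hα.1
  obtain ⟨_, ⟨α, hα, rfl⟩, hlt⟩ := exists_lt_of_lt_csSup
    (s := {y | ∃ α, memA β b c α ∧ y = Pfun c α}) ⟨_, _, memA_half hC, rfl⟩
    (sub_lt_self _ (half_pos hε))
  obtain ⟨K, hK⟩ := eventually_atTop.1 (hα.feasiblyApproximable hβ.1 hC (ε / 2) (half_pos hε))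
  refine ⟨K, fun k hk => ?_⟩
  obtain ⟨a, ha, h0, hf, hP⟩ := hK k hk
  have hsub : {y | ∃ α, memA β b c α ∧ (∀ i, k < i → α i = 0) ∧ kFeasA β k c α ∧
      y = Pfun c α} ⊆ {y | ∃ α, memA β b c α ∧ y = Pfun c α} :=
    fun y ⟨x, hx, _, _, hy⟩ => ⟨x, hx, hy⟩
  refine ⟨⟨a, ha, h0, hf⟩, ?_, csSup_le_csSup hbdd ⟨_, a, ha, h0, hf, rfl⟩ hsub⟩
  refine le_trans ?_ (le_csSup (hbdd.mono hsub) ⟨a, ha, h0, hf, rfl⟩)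
  unfold supP
  linarith
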